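/- Let X be a CBB(0) space (Alexandrov space of nonnegative curvature). Then for any four points a, b, c, d ∈ X, the sum of the Euclidean comparison angles at a satisfies: ∠̃(b,a,c) + ∠̃(b,a,d) + ∠̃(c,a,d) ≤ 2π. -/

import Mathlib

/-!
The inequality is first proved at an interior point `z` of a geodesic from `a` to `b`, and then
`z` tends to `a`. At such a `z` the geodesic continues on both sides, so if `φ` and `ψ` are the
comparison angles `∠̃(b,z,c)` and `∠̃(b,z,d)`, points `y`, `y'` on geodesics from `z` to `c`, `d`
and a point `w` on the geodesic from `z` back to `a` satisfy Euclidean law-of-cosines bounds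
without any infinitesimal error: `dist y w` and `dist y' w` are at most the Euclidean values for
the angles `π - φ` and `π - ψ` (`dist_opposite_sq_le`), while `dist y y'` is at least the
Euclidean value for `∠̃(c,z,d)` (`le_dist_sq_of_hinge` applied twice).
If the three angles added up to more than `2π`, then `(π - φ) + (π - ψ) < ∠̃(c,z,d) ≤ π`, and one
could choose `y`, `w`, `y'` so that their planar models for the angles `π - φ`, `π - ψ` are
collinear; the triangle inequality for `y`, `w`, `y'` then fails (`four_point_interior`).
-/

/-- A metric space has curvature bounded below by 0 (CBB(0)) if every pair of points
is joined by a constant-speed geodesic, and along any such geodesic the squared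
distance to an arbitrary point satisfies the reverse Euclidean comparison
(concavity) inequality. -/
def CBB0 (X : Type*) [MetricSpace X] : Prop :=
  (∀ x y : X, ∃ γ : ℝ → X, γ 0 = x ∧ γ 1 = y ∧
    ∀ s ∈ Set.Icc (0 : ℝ) 1, ∀ t ∈ Set.Icc (0 : ℝ) 1,
      dist (γ s) (γ t) = |s - t| * dist x y) ∧
  (∀ γ : ℝ → X,
    (∀ s ∈ Set.Icc (0 : ℝ) 1, ∀ t ∈ Set.Icc (0 : ℝ) 1,
      dist (γ s) (γ t) = |s - t| * dist (γ 0) (γ 1)) →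
    ∀ z : X, ∀ t ∈ Set.Icc (0 : ℝ) 1,
      (1 - t) * dist z (γ 0) ^ 2 + t * dist z (γ 1) ^ 2
          - t * (1 - t) * dist (γ 0) (γ 1) ^ 2
        ≤ dist z (γ t) ^ 2)

/-- The Euclidean comparison angle `∠̃(x, a, y)` at `a`, defined by the law of
cosines. -/
noncomputable def cmpAngle {X : Type*} [MetricSpace X] (x a y : X) : ℝ :=
  Real.arccos ((dist x a ^ 2 + dist a y ^ 2 - dist x y ^ 2) / (2 * dist x a * dist a y))

/-- The Euclidean law of cosines holds for comparison angles away from the degenerate case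
(where the division by zero in `cmpAngle` would produce a junk value). -/
theorem cmpAngle_law {X : Type*} [MetricSpace X] {x a y : X} (hx : x ≠ a) (hy : y ≠ a) :
    dist x y ^ 2 = dist a x ^ 2 + dist a y ^ 2
      - 2 * dist a x * dist a y * Real.cos (cmpAngle x a y) := by
  have h1 : 0 < dist a x := dist_pos.2 hx.symm
  have h2 : 0 < dist a y := dist_pos.2 hy.symm
  have t1 : dist x y ≤ dist a x + dist a y := dist_triangle_left x y a
  have t2 : dist a x ≤ dist a y + dist x y := dist_triangle_right a x y
  have t3 : dist a y ≤ dist a x + dist x y := dist_triangle a x y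
  have h0 : 0 ≤ dist x y := dist_nonneg
  unfold cmpAngle
  rw [dist_comm x a, Real.cos_arccos]
  · field_simp
    ring
  · rw [le_div_iff₀ (by positivity)]
    nlinarith
  · rw [div_le_iff₀ (by positivity)]
    nlinarith [mul_nonneg (sub_nonneg.2 t2) (sub_nonneg.2 t3)]

/-- Hinge comparison: a Euclidean lower bound for the distance from `q` to the endpoint of a
geodesic starting at `z`, with cosine parameter `C`, persists to the interior points. -/
theorem le_dist_sq_of_hinge {X : Type*} [MetricSpace X] (hX : CBB0 X) {γ : ℝ → X} {q z x : X}
    (h0 : γ 0 = z) (h1 : γ 1 = x)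
    (hγ : ∀ s ∈ Set.Icc (0 : ℝ) 1, ∀ t ∈ Set.Icc (0 : ℝ) 1,
      dist (γ s) (γ t) = |s - t| * dist z x)
    {C ρ t : ℝ} (ht : t ∈ Set.Icc (0 : ℝ) 1) (hρ : dist z q = ρ)
    (hC : dist z x ^ 2 + ρ ^ 2 - 2 * dist z x * ρ * C ≤ dist x q ^ 2) :
    (t * dist z x) ^ 2 + ρ ^ 2 - 2 * (t * dist z x) * ρ * C ≤ dist (γ t) q ^ 2 := by
  subst h0 h1
  have h := hX.2 γ hγ q t ht
  rw [dist_comm q, dist_comm q, dist_comm q, hρ] at h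
  nlinarith [mul_le_mul_of_nonneg_left hC ht.1]

/-- If `z = γ s` is interior to a geodesic ending at `γ 1`, a lower hinge bound for `y` in the
direction of `γ 1` becomes an upper bound, with the supplementary angle, in the opposite
direction. -/
theorem dist_opposite_sq_le {X : Type*} [MetricSpace X] (hX : CBB0 X) {γ : ℝ → X} {L : ℝ}
    (hγ : ∀ s ∈ Set.Icc (0 : ℝ) 1, ∀ t ∈ Set.Icc (0 : ℝ) 1,
      dist (γ s) (γ t) = |s - t| * L)
    {s s' : ℝ} (hs' : 0 ≤ s') (hss : s' ≤ s) (hs1 : s < 1) {y : X} {ρ C : ℝ}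
    (hρ : dist (γ s) y = ρ)
    (hC : ((1 - s) * L) ^ 2 + ρ ^ 2 - 2 * ((1 - s) * L) * ρ * C ≤ dist y (γ 1) ^ 2) :
    dist y (γ s') ^ 2 ≤ ρ ^ 2 + ((s - s') * L) ^ 2 + 2 * ((s - s') * L) * ρ * C := by
  have hp : 0 < 1 - s' := by linarith
  have mem : ∀ u ∈ Set.Icc (0 : ℝ) 1, s' + u * (1 - s') ∈ Set.Icc (0 : ℝ) 1 := by
    intro u hu
    constructor <;> nlinarith [hu.1, hu.2]
  have hd : dist (γ s') (γ 1) = (1 - s') * L := by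
    rw [hγ s' ⟨hs', by linarith⟩ 1 (by simp), abs_sub_comm, abs_of_pos hp]
  have hτ : (s - s') / (1 - s') ∈ Set.Icc (0 : ℝ) 1 :=
    ⟨div_nonneg (by linarith) hp.le, (div_le_one hp).2 (by linarith)⟩
  have h := hX.2 (fun u => γ (s' + u * (1 - s'))) ?_ y _ hτ
  · have e0 : s' + 0 * (1 - s') = s' := by ring
    have e1 : s' + 1 * (1 - s') = 1 := by ring
    have e2 : s' + (s - s') / (1 - s') * (1 - s') = s := by field_simp; ring
    simp only [e0, e1, e2, hd] at h
    rw [dist_comm y (γ s), hρ] at h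
    have h' : (1 - s) * dist y (γ s') ^ 2 + (s - s') * dist y (γ 1) ^ 2
        - (s - s') * (1 - s) * (1 - s') * L ^ 2 ≤ (1 - s') * ρ ^ 2 := by
      have := mul_le_mul_of_nonneg_left h hp.le
      refine le_trans (le_of_eq ?_) this
      field_simp
      ring
    have h2 := mul_le_mul_of_nonneg_left hC (sub_nonneg.2 hss)
    refine le_of_mul_le_mul_left ?_ (sub_pos.2 hs1)
    nlinarith
  · intro u hu v hv
    have e0 : s' + 0 * (1 - s') = s' := by ring
    have e1 : s' + 1 * (1 - s') = 1 := by ring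
    simp only [e0, e1, hd]
    rw [hγ _ (mem u hu) _ (mem v hv),
      show s' + u * (1 - s') - (s' + v * (1 - s')) = (u - v) * (1 - s') by ring,
      abs_mul, abs_of_pos hp, mul_assoc]

/-- In the planar triangle with two sides of length `1` enclosing the angle `2 A`, the point of
the base lying at angle `A + B` from one side is at distance `cos A / cos B` from the apex and
`sin (A + B) / cos B` from the end of that side. -/
theorem cevian_identity {A B : ℝ} (hB : Real.cos B ≠ 0) :
    1 + (Real.cos A / Real.cos B) ^ 2 - 2 * (Real.cos A / Real.cos B) * Real.cos (A + B)
      = (Real.sin (A + B) / Real.cos B) ^ 2 := by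
  have key : Real.cos B ^ 2 + Real.cos A ^ 2 - 2 * Real.cos A * Real.cos B * Real.cos (A + B)
      = Real.sin (A + B) ^ 2 := by
    rw [Real.cos_add, Real.sin_add]
    linear_combination (-Real.cos B ^ 2) * Real.sin_sq_add_cos_sq A
      - Real.cos A ^ 2 * Real.sin_sq_add_cos_sq B
  rw [div_pow (Real.sin _), ← key]
  field_simp

set_option maxHeartbeats 1000000 in
/-- The four-point comparison at a point `γ s` interior to a geodesic ending at the first of the
three other points. -/
theorem four_point_interior {X : Type*} [MetricSpace X] (hX : CBB0 X) {γ : ℝ → X} {L : ℝ}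
    (hL : 0 < L)
    (hγ : ∀ s ∈ Set.Icc (0 : ℝ) 1, ∀ t ∈ Set.Icc (0 : ℝ) 1,
      dist (γ s) (γ t) = |s - t| * L)
    {s : ℝ} (hs0 : 0 < s) (hs1 : s < 1) {c d : X} (hc : c ≠ γ s) (hd : d ≠ γ s) :
    cmpAngle (γ 1) (γ s) c + cmpAngle (γ 1) (γ s) d + cmpAngle c (γ s) d ≤ 2 * Real.pi := by
  by_contra! hlt
  have hD1 : dist (γ s) (γ 1) = (1 - s) * L := by
    rw [hγ s ⟨hs0.le, hs1.le⟩ 1 (by simp), abs_sub_comm, abs_of_pos (by linarith)]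
  have hb : γ 1 ≠ γ s := by
    rw [← dist_pos, dist_comm, hD1]
    exact mul_pos (by linarith) hL
  have l2 := cmpAngle_law hb hc
  have l3 := cmpAngle_law hb hd
  have l23 := cmpAngle_law hc hd
  have b2 : cmpAngle (γ 1) (γ s) c ≤ Real.pi := Real.arccos_le_pi _
  have b3 : cmpAngle (γ 1) (γ s) d ≤ Real.pi := Real.arccos_le_pi _
  have b23 : cmpAngle c (γ s) d ≤ Real.pi := Real.arccos_le_pi _
  set θ2 := cmpAngle (γ 1) (γ s) c
  set θ3 := cmpAngle (γ 1) (γ s) d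
  set θ := cmpAngle c (γ s) d
  set z := γ s with hz
  -- `A + B = π - θ2` and `A - B = π - θ3` are the angles on the side opposite to `γ 1`.
  obtain ⟨A, hA⟩ : ∃ A, A = Real.pi - (θ2 + θ3) / 2 := ⟨_, rfl⟩
  obtain ⟨B, hB⟩ : ∃ B, B = (θ3 - θ2) / 2 := ⟨_, rfl⟩
  have hpi := Real.pi_pos
  have cA : 0 < Real.cos A := Real.cos_pos_of_mem_Ioo ⟨by linarith, by linarith⟩
  have cB : 0 < Real.cos B := Real.cos_pos_of_mem_Ioo ⟨by linarith, by linarith⟩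
  have c2 : Real.cos θ2 = -Real.cos (A + B) := by
    rw [← Real.cos_pi_sub]; congr 1; linarith
  have c3 : Real.cos θ3 = -Real.cos (A + -B) := by
    rw [← Real.cos_pi_sub]; congr 1; linarith
  have c23 : Real.cos θ < Real.cos (2 * A) :=
    Real.cos_lt_cos_of_nonneg_of_le_pi (by linarith) b23 (by linarith)
  have s2 : 0 ≤ Real.sin (A + B) :=
    Real.sin_nonneg_of_nonneg_of_le_pi (by linarith) (by linarith)
  have s3 : 0 ≤ Real.sin (A + -B) :=
    Real.sin_nonneg_of_nonneg_of_le_pi (by linarith) (by linarith)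
  have sA : 0 ≤ Real.sin A :=
    Real.sin_nonneg_of_nonneg_of_le_pi (by linarith) (by linarith)
  have i2 := cevian_identity (A := A) cB.ne'
  have i3 := cevian_identity (A := A) (B := -B) (by rw [Real.cos_neg]; exact cB.ne')
  rw [Real.cos_neg] at i3
  have isum : Real.sin (A + B) / Real.cos B + Real.sin (A + -B) / Real.cos B
      = 2 * Real.sin A := by
    rw [Real.sin_add, Real.sin_add, Real.cos_neg, Real.sin_neg]
    field_simp
    ring
  set k := Real.cos A / Real.cos B with hk
  set e2 := Real.sin (A + B) / Real.cos B with he2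
  set e3 := Real.sin (A + -B) / Real.cos B with he3
  have kpos : 0 < k := div_pos cA cB
  have e2nn : 0 ≤ e2 := div_nonneg s2 cB.le
  have e3nn : 0 ≤ e3 := div_nonneg s3 cB.le
  have pc : 0 < dist z c := dist_pos.2 hc.symm
  have pd : 0 < dist z d := dist_pos.2 hd.symm
  -- The planar model is scaled by `ρ`, small enough for all three points to exist.
  obtain ⟨ρ, ρ0, ρc, ρd, ρk⟩ : ∃ ρ : ℝ, 0 < ρ ∧ ρ ≤ dist z c ∧ ρ ≤ dist z d ∧
      ρ * k ≤ s * L := by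
    refine ⟨min (min (dist z c) (dist z d)) (s * L / k),
      lt_min (lt_min pc pd) (div_pos (mul_pos hs0 hL) kpos),
      (min_le_left _ _).trans (min_le_left _ _),
      (min_le_left _ _).trans (min_le_right _ _), ?_⟩
    rw [← le_div_iff₀ kpos]
    exact min_le_right _ _
  obtain ⟨σ, σ0, σ1, hσ⟩ := hX.1 z c
  obtain ⟨τ, τ0, τ1, hτ⟩ := hX.1 z d
  have mc : ρ / dist z c ∈ Set.Icc (0 : ℝ) 1 := ⟨by positivity, (div_le_one pc).2 ρc⟩
  have md : ρ / dist z d ∈ Set.Icc (0 : ℝ) 1 := ⟨by positivity, (div_le_one pd).2 ρd⟩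
  have tc : ρ / dist z c * dist z c = ρ := div_mul_cancel₀ _ pc.ne'
  have td : ρ / dist z d * dist z d = ρ := div_mul_cancel₀ _ pd.ne'
  have dy : dist z (σ (ρ / dist z c)) = ρ := by
    have := hσ 0 (by simp) _ mc
    rwa [σ0, zero_sub, abs_neg, abs_of_nonneg mc.1, tc] at this
  have dy' : dist z (τ (ρ / dist z d)) = ρ := by
    have := hτ 0 (by simp) _ md
    rwa [τ0, zero_sub, abs_neg, abs_of_nonneg md.1, td] at this
  have g2 := le_dist_sq_of_hinge hX (q := γ 1) (C := Real.cos θ2) σ0 σ1 hσ mc hD1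
    (by rw [dist_comm c, l2, hD1]; apply le_of_eq; ring)
  have g3 := le_dist_sq_of_hinge hX (q := γ 1) (C := Real.cos θ3) τ0 τ1 hτ md hD1
    (by rw [dist_comm d, l3, hD1]; apply le_of_eq; ring)
  have g23 := le_dist_sq_of_hinge hX (q := d) (C := Real.cos θ) σ0 σ1 hσ mc rfl
    (by rw [l23])
  rw [tc] at g2 g23
  rw [td] at g3
  have g := le_dist_sq_of_hinge hX (q := σ (ρ / dist z c)) (C := Real.cos θ) τ0 τ1 hτ md dy
    (by rw [dist_comm d]; refine le_trans (le_of_eq ?_) g23; ring)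
  rw [td] at g
  set y := σ (ρ / dist z c)
  set y' := τ (ρ / dist z d)
  have hsub : s - (s - ρ * k / L) = ρ * k / L := by ring
  have hkL : ρ * k / L * L = ρ * k := div_mul_cancel₀ _ hL.ne'
  have w0 : 0 ≤ s - ρ * k / L := by
    rw [sub_nonneg, div_le_iff₀ hL]; exact ρk
  have w1 : s - ρ * k / L ≤ s := by
    have : 0 ≤ ρ * k / L := by positivity
    linarith
  have u2 := dist_opposite_sq_le hX hγ w0 w1 hs1 (y := y) (C := Real.cos θ2) dy
    (by refine le_trans (le_of_eq ?_) g2; ring)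
  have u3 := dist_opposite_sq_le hX hγ w0 w1 hs1 (y := y') (C := Real.cos θ3) dy'
    (by refine le_trans (le_of_eq ?_) g3; ring)
  rw [hsub, hkL] at u2 u3
  set w := γ (s - ρ * k / L)
  have v2 : dist y w ≤ ρ * e2 := by
    refine abs_le_of_sq_le_sq' ?_ (by positivity) |>.2
    rw [mul_pow, ← i2]
    refine u2.trans (le_of_eq ?_)
    rw [c2]; ring
  have v3 : dist y' w ≤ ρ * e3 := by
    refine abs_le_of_sq_le_sq' ?_ (by positivity) |>.2
    rw [mul_pow, ← i3]
    refine u3.trans (le_of_eq ?_)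
    rw [c3]; ring
  have tri : dist y' y ≤ ρ * (2 * Real.sin A) := by
    rw [← isum]
    linarith [dist_triangle_right y' y w]
  have tri2 : dist y' y ^ 2 ≤ (ρ * (2 * Real.sin A)) ^ 2 :=
    pow_le_pow_left₀ dist_nonneg tri 2
  rw [Real.cos_two_mul, Real.cos_sq'] at c23
  linarith [mul_lt_mul_of_pos_left c23 (pow_pos ρ0 2)]

/-- Comparison angles depend continuously on the vertex away from the degenerate case. -/
theorem tendsto_cmpAngle {X ι : Type*} [MetricSpace X] {l : Filter ι} {f : ι → X} {x a y : X}
    (hf : Filter.Tendsto f l (nhds a)) (hx : x ≠ a) (hy : y ≠ a) :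
    Filter.Tendsto (fun i => cmpAngle x (f i) y) l (nhds (cmpAngle x a y)) := by
  unfold cmpAngle
  have h1 : Filter.Tendsto (fun i => dist x (f i)) l (nhds (dist x a)) :=
    tendsto_const_nhds.dist hf
  have h2 : Filter.Tendsto (fun i => dist (f i) y) l (nhds (dist a y)) :=
    hf.dist tendsto_const_nhds
  refine (Real.continuous_arccos.tendsto _).comp
    ((((h1.pow 2).add (h2.pow 2)).sub tendsto_const_nhds).div ((h1.const_mul 2).mul h2) ?_)
  have := dist_ne_zero.2 hx
  have := dist_ne_zero.2 hy.symm
  positivity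

/-- Global four-point comparison in CBB(0) spaces: for any four points `a, b, c, d`,
the sum of the three comparison angles at `a` is at most `2π`. -/
theorem cbb0_four_point {X : Type*} [MetricSpace X] (hX : CBB0 X) (a b c d : X) :
    cmpAngle b a c + cmpAngle b a d + cmpAngle c a d ≤ 2 * Real.pi := by
  have hpi := Real.pi_pos
  have bound : ∀ x y : X, cmpAngle x a y ≤ Real.pi := fun x y => Real.arccos_le_pi _
  -- If one of the points equals `a`, division by zero makes its two angles equal to `π / 2`.
  have deg1 : ∀ y : X, cmpAngle a a y = Real.pi / 2 := fun y => by simp [cmpAngle]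
  have deg2 : ∀ y : X, cmpAngle y a a = Real.pi / 2 := fun y => by simp [cmpAngle]
  rcases eq_or_ne b a with rfl | hb
  · rw [deg1, deg1]; linarith [bound c d]
  rcases eq_or_ne c a with rfl | hc
  · rw [deg1, deg2]; linarith [bound b d]
  rcases eq_or_ne d a with rfl | hd
  · rw [deg2, deg2]; linarith [bound b c]
  obtain ⟨γ, γ0, γ1, hγ⟩ := hX.1 a b
  have lim : Filter.Tendsto γ (nhdsWithin 0 (Set.Ioo 0 1)) (nhds a) := by
    rw [tendsto_iff_dist_tendsto_zero]
    have h : Filter.Tendsto (fun s : ℝ => |s - 0| * dist a b) (nhds 0) (nhds 0) := by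
      have : Continuous fun s : ℝ => |s - 0| * dist a b := by fun_prop
      simpa using this.tendsto 0
    refine (h.mono_left nhdsWithin_le_nhds).congr' ?_
    filter_upwards [self_mem_nhdsWithin] with s hs
    rw [← hγ s ⟨hs.1.le, hs.2.le⟩ 0 (by simp), γ0]
  have : (nhdsWithin (0 : ℝ) (Set.Ioo 0 1)).NeBot := left_nhdsWithin_Ioo_neBot one_pos
  refine le_of_tendsto (((tendsto_cmpAngle lim hb hc).add (tendsto_cmpAngle lim hb hd)).add
    (tendsto_cmpAngle lim hc hd)) ?_
  filter_upwards [self_mem_nhdsWithin, lim.eventually_ne hc.symm, lim.eventually_ne hd.symm]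
    with s hs h1 h2
  rw [← γ1]
  exact four_point_interior hX (dist_pos.2 hb.symm) hγ hs.1 hs.2 h1.symm h2.symm
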